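/- Let C be a category with finite products and X a projection-coextensive object of C. Then X has the finite strict refinement property: for any finite index types I and J and any two product diagrams (f_i : X → A_i)_{i∈I} and (g_j : X → B_j)_{j∈J} (limit cones over the corresponding discrete diagrams), there exist objects C_{i,j} and morphisms α_{i,j} : A_i → C_{i,j} and β_{i,j} : B_j → C_{i,j} such that α_{i,j}∘f_i = β_{i,j}∘g_j for all i ∈ I and j ∈ J, for each i ∈ I the family (α_{i,j} : A_i → C_{i,j})_{j∈J} is a product diagram, and for each j ∈ J the family (β_{i,j} : B_j → C_{i,j})_{i∈I} is a product diagram. -/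

import Mathlib

open CategoryTheory CategoryTheory.Limits

universe v u

variable {C : Type u} [Category.{v} C]

/-- `(p, q)` is a binary product diagram, exhibiting `X` as the product of `A` and `B`. -/
def IsBinaryProduct {X A B : C} (p : X ⟶ A) (q : X ⟶ B) : Prop :=
  Nonempty (IsLimit (BinaryFan.mk p q))

/-- `p : X ⟶ A` is a product projection. -/
def IsProductProjection {X A : C} (p : X ⟶ A) : Prop :=
  ∃ (B : C) (q : X ⟶ B), IsBinaryProduct p q

/-- A pushout square whose two legs belong to the class `M`. -/
def IsMPushout (M : MorphismProperty C) {Z A B P : C}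
    (f : Z ⟶ A) (g : Z ⟶ B) (a : A ⟶ P) (b : B ⟶ P) : Prop :=
  IsPushout f g a b ∧ M a ∧ M b

/-- `X` is an `M`-coextensive object. -/
structure MCoextensive (M : MorphismProperty C) (X : C) : Prop where
  pushout_exists : ∀ ⦃Y A : C⦄ (m : X ⟶ Y) (p : X ⟶ A), M m → IsProductProjection p →
    ∃ (P : C) (a : A ⟶ P) (b : Y ⟶ P), IsMPushout M p m a b
  isBinaryProduct_iff : ∀ ⦃A₁ A₂ Y B₁ B₂ : C⦄ (π₁ : X ⟶ A₁) (π₂ : X ⟶ A₂)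
    (f : X ⟶ Y) (p₁ : A₁ ⟶ B₁) (p₂ : A₂ ⟶ B₂) (π₁' : Y ⟶ B₁) (π₂' : Y ⟶ B₂),
    IsBinaryProduct π₁ π₂ → M f → M p₁ → M p₂ →
    π₁ ≫ p₁ = f ≫ π₁' → π₂ ≫ p₂ = f ≫ π₂' →
    (IsBinaryProduct π₁' π₂' ↔ (IsMPushout M π₁ f p₁ π₁' ∧ IsMPushout M π₂ f p₂ π₂'))

/-- The class of product projections. -/
def projections (C : Type u) [Category.{v} C] : MorphismProperty C :=
  fun _ _ f => IsProductProjection f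

/-- `X` is projection-coextensive. -/
def ProjectionCoextensive (X : C) : Prop := MCoextensive (projections C) X

/-- `f` is a regular epimorphism (a coequalizer of some parallel pair). -/
def IsRegularEpimorphism {X Y : C} (f : X ⟶ Y) : Prop :=
  ∃ (W : C) (a b : W ⟶ X) (h : a ≫ f = b ≫ f), Nonempty (IsColimit (Cofork.ofπ f h))

/-- The class of regular epimorphisms. -/
def regularEpis (C : Type u) [Category.{v} C] : MorphismProperty C :=
  fun _ _ f => IsRegularEpimorphism f

/-- `X` is regularly-coextensive. -/
def RegularlyCoextensive (X : C) : Prop := MCoextensive (regularEpis C) X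

/-- A regular category: finitely complete, coequalizers of kernel pairs, and
regular epimorphisms are stable under pullback. -/
class IsRegularCategory (C : Type u) [Category.{v} C] [HasFiniteLimits C] : Prop where
  hasCoequalizer_kernelPair : ∀ {X Y : C} (f : X ⟶ Y),
    HasCoequalizer (pullback.fst f f) (pullback.snd f f)
  regularEpi_stable : ∀ {X Y Z : C} (f : X ⟶ Y) (g : Z ⟶ Y),
    IsRegularEpimorphism f → IsRegularEpimorphism (pullback.snd f g)

/-- `X` has global support: the unique morphism to the terminal object is a regular epi. -/
def HasGlobalSupport [HasTerminal C] (X : C) : Prop :=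
  IsRegularEpimorphism (terminal.from X)

theorem isBinaryProduct_iff_existsUnique {X A B : C} (p : X ⟶ A) (q : X ⟶ B) :
    IsBinaryProduct p q ↔
      ∀ (T : C) (a : T ⟶ A) (b : T ⟶ B), ∃! u : T ⟶ X, u ≫ p = a ∧ u ≫ q = b := by
  constructor
  · rintro ⟨h⟩ T a b
    refine ⟨h.lift (BinaryFan.mk a b), ⟨?_, ?_⟩, ?_⟩
    · exact h.fac (BinaryFan.mk a b) ⟨WalkingPair.left⟩
    · exact h.fac (BinaryFan.mk a b) ⟨WalkingPair.right⟩
    · rintro u ⟨h1, h2⟩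
      apply BinaryFan.IsLimit.hom_ext h
      · exact h1.trans (h.fac (BinaryFan.mk a b) ⟨WalkingPair.left⟩).symm
      · exact h2.trans (h.fac (BinaryFan.mk a b) ⟨WalkingPair.right⟩).symm
  · intro h
    exact ⟨BinaryFan.isLimitMk (fun s => (h _ s.fst s.snd).choose)
      (fun s => (h _ s.fst s.snd).choose_spec.1.1)
      (fun s => (h _ s.fst s.snd).choose_spec.1.2)
      (fun s m h1 h2 => (h _ s.fst s.snd).choose_spec.2 m ⟨h1, h2⟩)⟩

/-- Elementwise form of being a product diagram. -/
def IsProd {J : Type} {Y : C} {D : J → C} (d : ∀ j, Y ⟶ D j) : Prop :=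
  ∀ (T : C) (t : ∀ j, T ⟶ D j), ∃! u : T ⟶ Y, ∀ j, u ≫ d j = t j

theorem isProd_iff {J : Type} {Y : C} {D : J → C} (d : ∀ j, Y ⟶ D j) :
    Nonempty (IsLimit (Fan.mk Y d)) ↔ IsProd d := by
  constructor
  · rintro ⟨h⟩ T t
    refine ⟨Fan.IsLimit.lift h t, fun j => Fan.IsLimit.fac h t j, fun u hu => ?_⟩
    apply Fan.IsLimit.hom_ext h
    intro j
    exact (hu j).trans (Fan.IsLimit.fac h t j).symm
  · intro h
    exact ⟨Fan.IsLimit.mk _ (fun s => (h _ s.proj).choose)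
      (fun s => (h _ s.proj).choose_spec.1)
      (fun s m hm => (h _ s.proj).choose_spec.2 m hm)⟩

theorem IsBinaryProduct.ext {X A B T : C} {p : X ⟶ A} {q : X ⟶ B} (h : IsBinaryProduct p q)
    {u v : T ⟶ X} (h1 : u ≫ p = v ≫ p) (h2 : u ≫ q = v ≫ q) : u = v :=
  ((isBinaryProduct_iff_existsUnique p q).1 h T (v ≫ p) (v ≫ q)).unique ⟨h1, h2⟩ ⟨rfl, rfl⟩

theorem IsBinaryProduct.exists_lift {X A B T : C} {p : X ⟶ A} {q : X ⟶ B}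
    (h : IsBinaryProduct p q) (a : T ⟶ A) (b : T ⟶ B) : ∃ u : T ⟶ X, u ≫ p = a ∧ u ≫ q = b :=
  ((isBinaryProduct_iff_existsUnique p q).1 h T a b).exists

theorem isBinaryProduct_of {X A B : C} {p : X ⟶ A} {q : X ⟶ B}
    (h1 : ∀ (T : C) (a : T ⟶ A) (b : T ⟶ B), ∃ u : T ⟶ X, u ≫ p = a ∧ u ≫ q = b)
    (h2 : ∀ (T : C) (u v : T ⟶ X), u ≫ p = v ≫ p → u ≫ q = v ≫ q → u = v) :
    IsBinaryProduct p q := by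
  rw [isBinaryProduct_iff_existsUnique]
  intro T a b
  obtain ⟨u, hu1, hu2⟩ := h1 T a b
  exact ⟨u, ⟨hu1, hu2⟩, fun v hv => h2 T v u (hv.1.trans hu1.symm) (hv.2.trans hu2.symm)⟩

theorem IsBinaryProduct.swap {X A B : C} {p : X ⟶ A} {q : X ⟶ B} (h : IsBinaryProduct p q) :
    IsBinaryProduct q p :=
  isBinaryProduct_of (fun T a b => by
    obtain ⟨u, h1, h2⟩ := h.exists_lift b a
    exact ⟨u, h2, h1⟩) (fun T u v h1 h2 => h.ext h2 h1)

section

variable [HasFiniteProducts C]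

theorem isBinaryProduct_iso_terminal {X Y : C} (e : X ⟶ Y) [IsIso e] :
    IsBinaryProduct e (terminal.from X) :=
  isBinaryProduct_of (fun T a b => ⟨a ≫ inv e, by simp, Subsingleton.elim _ _⟩)
    (fun T u v h1 _ => (cancel_mono e).1 h1)

theorem isProductProjection_iso {X Y : C} (e : X ⟶ Y) [IsIso e] : IsProductProjection e :=
  ⟨_, _, isBinaryProduct_iso_terminal e⟩

theorem isProductProjection_terminal (X : C) : IsProductProjection (terminal.from X) :=
  ⟨_, _, (isBinaryProduct_iso_terminal (𝟙 X)).swap⟩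

/-- Reassociation of binary products. -/
theorem IsBinaryProduct.assoc {X K Y A L : C} {b : X ⟶ K} {r : X ⟶ Y} {p : Y ⟶ A} {s : Y ⟶ L}
    (h : IsBinaryProduct b r) (h' : IsBinaryProduct p s) :
    IsBinaryProduct (r ≫ p) (prod.lift b (r ≫ s)) :=
  isBinaryProduct_of (fun T x y => by
    obtain ⟨w, hw1, hw2⟩ := h'.exists_lift x (y ≫ prod.snd)
    obtain ⟨u, hu1, hu2⟩ := h.exists_lift (y ≫ prod.fst) w
    refine ⟨u, by rw [← Category.assoc, hu2, hw1], ?_⟩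
    ext
    · simp only [Category.assoc, prod.lift_fst, hu1]
    · simp only [Category.assoc, prod.lift_snd]
      rw [← Category.assoc, hu2, hw2]) (fun T u v h1 h2 => by
    have h3 := congrArg (fun z => z ≫ prod.fst) h2
    have h4 := congrArg (fun z => z ≫ prod.snd) h2
    simp only [Category.assoc, prod.lift_fst, prod.lift_snd] at h3 h4
    exact h.ext h3 (h'.ext (by simpa using h1) (by simpa using h4)))

theorem IsProductProjection.comp {X Y A : C} {r : X ⟶ Y} {p : Y ⟶ A}
    (h : IsProductProjection r) (h' : IsProductProjection p) : IsProductProjection (r ≫ p) := by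
  obtain ⟨K, b, hb⟩ := h
  obtain ⟨L, s, hs⟩ := h'
  exact ⟨_, _, hb.swap.assoc hs⟩

theorem epi_of_projection {X Y : C} (hX : ProjectionCoextensive X) {r : X ⟶ Y}
    (h : IsProductProjection r) : Epi r := by
  obtain ⟨K, b, hb⟩ := h
  have := (hX.isBinaryProduct_iff r b r (𝟙 Y) (terminal.from K) (𝟙 Y) (terminal.from Y) hb
    ⟨_, _, hb⟩ (isProductProjection_iso _) (isProductProjection_terminal _) rfl
    (Subsingleton.elim _ _)).1 (isBinaryProduct_iso_terminal _)
  have hp := this.1.1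
  constructor
  intro Z u v huv
  have h1 := hp.inl_desc u v huv
  have h2 := hp.inr_desc u v huv
  rw [← h1, h2]

theorem isMPushout_of_isPushout {X Y A P : C} (hX : ProjectionCoextensive X) {p : X ⟶ A}
    {m : X ⟶ Y} {a : A ⟶ P} {b : Y ⟶ P} (hp : IsProductProjection p)
    (hm : IsProductProjection m) (h : IsPushout p m a b) :
    IsMPushout (projections C) p m a b := by
  obtain ⟨Q, a', b', hQ, ha, hb⟩ := hX.pushout_exists m p hm hp
  refine ⟨h, ?_, ?_⟩
  · change IsProductProjection a
    rw [← IsPushout.inl_isoIsPushout_hom _ _ hQ h]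
    exact IsProductProjection.comp ha (isProductProjection_iso _)
  · change IsProductProjection b
    rw [← IsPushout.inr_isoIsPushout_hom _ _ hQ h]
    exact IsProductProjection.comp hb (isProductProjection_iso _)

theorem binary_step {X B0 B' A1 A2 Y D1 D2 : C} (hX : ProjectionCoextensive X)
    {b0 : X ⟶ B0} {r : X ⟶ B'} (hr : IsBinaryProduct b0 r)
    {p : B' ⟶ A1} {s : B' ⟶ A2} (hps : IsBinaryProduct p s)
    {k : B' ⟶ Y} (hk : IsProductProjection (r ≫ k))
    {a1 : A1 ⟶ D1} {d1 : Y ⟶ D1} (h1 : IsPushout (r ≫ p) (r ≫ k) a1 d1)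
    {a2 : A2 ⟶ D2} {d2 : Y ⟶ D2} (h2 : IsPushout (r ≫ s) (r ≫ k) a2 d2) :
    IsBinaryProduct d1 d2 := by
  have hrE : Epi r := epi_of_projection hX ⟨_, _, hr.swap⟩
  have hc := hr.assoc hps
  set c := prod.lift b0 (r ≫ s) with hcdef
  have hcs : c ≫ prod.snd = r ≫ s := prod.lift_snd _ _
  have hcf : c ≫ prod.fst = b0 := prod.lift_fst _ _
  obtain ⟨P, e, d, hP, he, hd⟩ := hX.pushout_exists (r ≫ k) c hk ⟨_, _, hc.swap⟩
  have h1M := isMPushout_of_isPushout hX ⟨_, _, hc⟩ hk h1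
  have hprod : IsBinaryProduct d1 d :=
    (hX.isBinaryProduct_iff _ _ (r ≫ k) a1 e d1 d hc hk h1M.2.1 he h1.w hP.w).2
      ⟨h1M, hP, he, hd⟩
  have hA2 : IsPushout r c s prod.snd :=
    ((hX.isBinaryProduct_iff b0 r c (𝟙 _) s prod.fst prod.snd hr ⟨_, _, hc.swap⟩
      (isProductProjection_iso _) ⟨_, _, hps.swap⟩ (by simp [hcf]) hcs.symm).1
      ⟨prodIsProd _ _⟩).2.1
  have wt : r ≫ (k ≫ d) = c ≫ e := by rw [hP.w, Category.assoc]
  have wφ : c ≫ (prod.snd ≫ a2) = (r ≫ k) ≫ d2 := by rw [← Category.assoc, hcs, h2.w]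
  let φ : P ⟶ D2 := hP.desc (prod.snd ≫ a2) d2 wφ
  have eφ : e ≫ φ = prod.snd ≫ a2 := hP.inl_desc _ _ _
  have dφ : d ≫ φ = d2 := hP.inr_desc _ _ _
  let t : A2 ⟶ P := hA2.desc (k ≫ d) e wt
  have st : s ≫ t = k ≫ d := hA2.inl_desc _ _ _
  have et : prod.snd ≫ t = e := hA2.inr_desc _ _ _
  have wψ : (r ≫ s) ≫ t = (r ≫ k) ≫ d := by simp only [Category.assoc, st]
  let ψ : D2 ⟶ P := h2.desc t d wψ
  have aψ : a2 ≫ ψ = t := h2.inl_desc _ _ _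
  have dψ : d2 ≫ ψ = d := h2.inr_desc _ _ _
  have hsk : s ≫ a2 = k ≫ d2 := by
    rw [← cancel_epi r]; simpa using h2.w
  have tφ : t ≫ φ = a2 := by
    apply hA2.hom_ext
    · rw [← Category.assoc, st, Category.assoc, dφ, hsk]
    · rw [← Category.assoc, et, eφ]
  have ψφ : ψ ≫ φ = 𝟙 _ := by
    apply h2.hom_ext
    · rw [← Category.assoc, aψ, tφ, Category.comp_id]
    · rw [← Category.assoc, dψ, dφ, Category.comp_id]
  have φψ : φ ≫ ψ = 𝟙 _ := by
    apply hP.hom_ext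
    · rw [← Category.assoc, eφ, Category.assoc, aψ, et, Category.comp_id]
    · rw [← Category.assoc, dφ, dψ, Category.comp_id]
  refine isBinaryProduct_of (fun T x y => ?_) (fun T u v hu hv => ?_)
  · obtain ⟨u, hu, hv⟩ := hprod.exists_lift x (y ≫ ψ)
    refine ⟨u, hu, ?_⟩
    rw [← dφ, ← Category.assoc, hv, Category.assoc, ψφ, Category.comp_id]
  · apply hprod.ext hu
    rw [← dψ, ← Category.assoc, hv, Category.assoc]

theorem IsProd.option {J : Type} {Y E : C} {D : Option J → C} {d : ∀ j, Y ⟶ D j}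
    {q : Y ⟶ E} {m : ∀ j : J, E ⟶ D (some j)} (h : IsBinaryProduct (d none) q)
    (hm : IsProd m) (w : ∀ j, q ≫ m j = d (some j)) : IsProd d := by
  intro T t
  obtain ⟨y, hy, hy'⟩ := hm T (fun j => t (some j))
  obtain ⟨u, hu1, hu2⟩ := h.exists_lift (t none) y
  refine ⟨u, ?_, ?_⟩
  · rintro (_ | j)
    · exact hu1
    · rw [← w, ← Category.assoc, hu2, hy]
  · intro v hv
    refine h.ext ((hv none).trans hu1.symm) ?_
    rw [hu2]
    apply hy'
    intro j
    rw [Category.assoc, w]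
    exact hv (some j)

theorem isProd_pi {J : Type} [Finite J] (B : J → C) : IsProd (fun j => Pi.π B j) :=
  (isProd_iff _).1 ⟨productIsProduct B⟩

/-- The splitting of a product over `J` at a decomposition of the index type. -/
theorem IsProd.split_none {J : Type} [Finite J] {Y : C} {D : Option J → C}
    {d : ∀ j, Y ⟶ D j} (h : IsProd d) :
    IsBinaryProduct (d none) (Pi.lift (fun j : J => d (some j))) := by
  refine isBinaryProduct_of (fun T x y => ?_) (fun T u v hu hv => ?_)
  · obtain ⟨u, hu, -⟩ := h T (fun j => match j with
      | none => x
      | some j => y ≫ Pi.π _ j)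
    refine ⟨u, hu none, ?_⟩
    apply Pi.hom_ext
    intro j
    simpa using hu (some j)
  · refine (h T (fun j => v ≫ d j)).unique ?_ (fun _ => rfl)
    rintro (_ | j)
    · exact hu
    · simpa using congrArg (fun z => z ≫ Pi.π _ j) hv

theorem IsProd.isProductProjection {J : Type} [Finite J] {Y : C} {D : J → C}
    {d : ∀ j, Y ⟶ D j} (h : IsProd d) (i : J) : IsProductProjection (d i) := by
  classical
  refine ⟨_, Pi.lift (fun j : {j : J // j ≠ i} => d j.1), ?_⟩
  refine isBinaryProduct_of (fun T x y => ?_) (fun T u v hu hv => ?_)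
  · obtain ⟨u, hu, -⟩ := h T (fun j => if hj : j = i then x ≫ eqToHom (by rw [hj])
      else y ≫ Pi.π (fun j : {j : J // j ≠ i} => D j.1) ⟨j, hj⟩)
    refine ⟨u, by simpa using hu i, ?_⟩
    apply Pi.hom_ext
    rintro ⟨j, hj⟩
    simpa [hj] using hu j
  · refine (h T (fun j => v ≫ d j)).unique ?_ (fun _ => rfl)
    intro j
    by_cases hj : j = i
    · subst hj; exact hu
    · simpa using congrArg (fun z => z ≫ Pi.π (fun j : {j : J // j ≠ i} => D j.1) ⟨j, hj⟩) hv

theorem IsProd.reindex {J K : Type} (e : J ≃ K) {Y : C} {D : K → C} {d : ∀ j, Y ⟶ D j} :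
    IsProd (fun j => d (e j)) ↔ IsProd d := by
  have key : ∀ (T : C) (u : T ⟶ Y) (t : ∀ j, T ⟶ D j),
      (∀ j, u ≫ d (e j) = t (e j)) ↔ ∀ j, u ≫ d j = t j := fun T u t =>
    e.forall_congr_right (q := fun j => u ≫ d j = t j)
  constructor
  · intro h T t
    simpa only [key] using h T (fun j => t (e j))
  · intro h T t
    obtain ⟨t', rfl⟩ : ∃ t' : ∀ j, T ⟶ D j, t = fun j => t' (e j) := by
      refine ⟨fun k => t (e.symm k) ≫ eqToHom (by simp), ?_⟩
      funext j
      have : ∀ j' (hj : j' = j), t j = t j' ≫ eqToHom (by rw [hj]) := by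
        rintro _ rfl; simp
      exact this _ (by simp)
    simpa only [key] using h T t'

theorem finite_step {X : C} (hX : ProjectionCoextensive X) (J : Type) [Finite J] :
    ∀ {B0 B' Y : C} {B D : J → C} {b0 : X ⟶ B0} {r : X ⟶ B'} (_ : IsBinaryProduct b0 r)
      {π : ∀ j, B' ⟶ B j} (_ : IsProd π) {k : B' ⟶ Y} (_ : IsProductProjection (r ≫ k))
      {a : ∀ j, B j ⟶ D j} {d : ∀ j, Y ⟶ D j}
      (_ : ∀ j, IsPushout (r ≫ π j) (r ≫ k) (a j) (d j)), IsProd d := by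
  induction J using Finite.induction_empty_option with
  | of_equiv e ih =>
    intro B0 B' Y B D b0 r hr π hπ k hk a d h
    rw [← IsProd.reindex e]
    exact ih hr ((IsProd.reindex e).2 hπ) hk (fun j => h (e j))
  | h_empty =>
    intro B0 B' Y B D b0 r hr π hπ k hk a d h T t
    have hE := epi_of_projection hX hk
    have hk' : Epi k := epi_of_epi r k
    obtain ⟨z, -, -⟩ := hπ T (fun j => j.elim)
    obtain ⟨y, -, -⟩ := hπ Y (fun j => j.elim)
    have hyk : y ≫ k = 𝟙 Y := by
      rw [← cancel_epi k, ← Category.assoc,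
        (hπ B' (fun j => j.elim)).unique (y₁ := k ≫ y) (y₂ := 𝟙 _) (fun j => j.elim)
          (fun j => j.elim)]
      simp
    refine ⟨z ≫ k, fun j => j.elim, fun u _ => ?_⟩
    have := (hπ T (fun j => j.elim)).unique (y₁ := u ≫ y) (y₂ := z) (fun j => j.elim)
          (fun j => j.elim)
    rw [← this, Category.assoc, hyk, Category.comp_id]
  | h_option ih =>
    intro B0 B' Y B D b0 r hr π hπ k hk a d h
    have hps := hπ.split_none
    set s := Pi.lift (fun j => π (some j)) with hs
    have hr' := hr.assoc hps.swap
    obtain ⟨D2, a2, d2, hD2, ha2, hd2⟩ := hX.pushout_exists (r ≫ k) (r ≫ s) hk ⟨_, _, hr'⟩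
    have hbin := binary_step hX hr hps hk (h none) hD2
    have hsE : Epi (r ≫ s) := epi_of_projection hX ⟨_, _, hr'⟩
    have hsπ : ∀ j, s ≫ Pi.π _ j = π (some j) := fun j => by simp [hs]
    have hw : ∀ j, (r ≫ s) ≫ (Pi.π _ j ≫ a (some j)) = (r ≫ k) ≫ d (some j) := fun j => by
      rw [← (h (some j)).w, ← hsπ]; simp only [Category.assoc]
    let m : ∀ j, D2 ⟶ D (some j) := fun j => hD2.desc _ _ (hw j)
    have hm1 : ∀ j, a2 ≫ m j = Pi.π _ j ≫ a (some j) := fun j => hD2.inl_desc _ _ _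
    have hm2 : ∀ j, d2 ≫ m j = d (some j) := fun j => hD2.inr_desc _ _ _
    refine IsProd.option hbin (m := m) ?_ hm2
    refine ih hr'.swap (isProd_pi _) (k := a2) ?_ (a := fun j => a (some j)) ?_
    · rw [hD2.w]; exact hk.comp hd2
    · intro j
      refine ⟨⟨?_⟩, ⟨PushoutCocone.IsColimit.mk _
        (fun c => (h (some j)).desc c.inl (d2 ≫ c.inr) ?_) ?_ ?_ ?_⟩⟩
      · simp only [Category.assoc, hm1]
      · rw [← hsπ, ← Category.assoc (r ≫ k), ← hD2.w]
        simpa using c.condition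
      · intro c; exact (h (some j)).inl_desc _ _ _
      · intro c
        apply hD2.hom_ext
        · rw [← Category.assoc, hm1]
          refine (Category.assoc _ _ _).trans ?_
          rw [(h (some j)).inl_desc, ← cancel_epi (r ≫ s)]
          simpa using c.condition
        · rw [← Category.assoc, hm2, (h (some j)).inr_desc]
      · intro c l h1 h2
        apply (h (some j)).hom_ext
        · rw [(h (some j)).inl_desc, h1]
        · rw [(h (some j)).inr_desc, ← hm2]
          refine (Category.assoc _ _ _).trans ?_
          rw [h2]

theorem finite_step_top {X Y : C} (hX : ProjectionCoextensive X) {J : Type} [Finite J]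
    {B D : J → C} {g : ∀ j, X ⟶ B j} (hg : IsProd g) {f : X ⟶ Y} (hf : IsProductProjection f)
    {a : ∀ j, B j ⟶ D j} {d : ∀ j, Y ⟶ D j} (h : ∀ j, IsPushout (g j) f (a j) (d j)) :
    IsProd d :=
  finite_step hX J (isBinaryProduct_iso_terminal (𝟙 X)).swap hg (k := f) (by simpa using hf)
    (a := a) (fun j => by simpa using h j)

end

/-- A projection-coextensive object has the finite strict refinement property. -/
theorem projectionCoextensive_finite_strict_refinement
    {C : Type u} [Category.{v} C] [HasFiniteProducts C]
    (X : C) (hX : ProjectionCoextensive X)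
    (I J : Type) [Finite I] [Finite J]
    (A : I → C) (B : J → C) (f : ∀ i, X ⟶ A i) (g : ∀ j, X ⟶ B j)
    (hf : Nonempty (IsLimit (Fan.mk X f))) (hg : Nonempty (IsLimit (Fan.mk X g))) :
    ∃ (D : I → J → C) (α : ∀ i j, A i ⟶ D i j) (β : ∀ i j, B j ⟶ D i j),
      (∀ i j, f i ≫ α i j = g j ≫ β i j) ∧
      (∀ i, Nonempty (IsLimit (Fan.mk (A i) (fun j => α i j)))) ∧
      (∀ j, Nonempty (IsLimit (Fan.mk (B j) (fun i => β i j)))) := by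
  rw [isProd_iff] at hf hg
  have hfp := fun i => hf.isProductProjection i
  have hgp := fun j => hg.isProductProjection j
  choose D α β h using fun i j => hX.pushout_exists (g j) (f i) (hgp j) (hfp i)
  refine ⟨D, α, β, fun i j => (h i j).1.w, fun i => ?_, fun j => ?_⟩
  · rw [isProd_iff]
    exact finite_step_top hX hg (hfp i) (a := fun j => β i j) (fun j => (h i j).1.flip)
  · rw [isProd_iff]
    exact finite_step_top hX hf (hgp j) (a := fun i => α i j) (fun i => (h i j).1)
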